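/- Let n ≥ 2 be an integer and k > 0. For j ∈ ℕ define w_j(r) := cos(√k·r/2) · ₂F₁(−j, n + j, n/2; sin²(√k·r/2)) for r ∈ (0, π/√k) (the hypergeometric series terminates, so w_j is well defined). Then each w_j is a nonzero element of L²((0, π/√k), m(r)dr), the family {w_j}_{j∈ℕ} is pairwise orthogonal in this Hilbert space (∫₀^{π/√k} w_j(r)·w_{j'}(r)·m(r) dr = 0 for j ≠ j'), and the linear span of {w_j}_{j∈ℕ} is dense in L²((0, π/√k), m(r)dr); that is, the w_j form a complete orthogonal system. -/

import Mathlib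

open Real Set MeasureTheory

/-- The density of the radial measure `dμ = m(r) dr`. -/
noncomputable def radialDensity (n : ℕ) (k : ℝ) (r : ℝ) : ℝ :=
  (Real.sin (Real.sqrt k * r) / Real.sqrt k) ^ (n - 1)

/-- The radial measure `m(r) dr` on `(0, π/√k)`. -/
noncomputable def radialMeasure (n : ℕ) (k : ℝ) : Measure ℝ :=
  (volume.restrict (Ioo (0 : ℝ) (π / Real.sqrt k))).withDensity
    (fun r => ENNReal.ofReal (radialDensity n k r))

/-!
The substitution `x = sin² (√k r / 2)` turns `w_j` into `(1 - x)^(1/2) P_j(x)` with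
`P_j = ₂F₁(-j, n + j; n/2; x)`, and `m(r) dr` into a multiple of `(x (1 - x))^(n/2 - 1) dx`, so that
`w_i w_j m(r) dr` becomes a multiple of the Jacobi weight `x^(n/2 - 1) (1 - x)^(n/2)` against
`P_i P_j`. The hypergeometric equation says that `P_j` is an eigenfunction of a Sturm–Liouville
operator which is symmetric for this weight, with eigenvalue `-j (n + j)`; the eigenvalues being
distinct, orthogonality follows. For completeness, the `P_j` have degree `j`, so they span all
polynomials, and by Stone–Weierstrass polynomials in the injective function `sin² (√k r / 2)` are
uniformly dense in the continuous functions on `[0, π/√k]`: a function orthogonal to every `w_j`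
vanishes almost everywhere because `cos (√k r / 2)` does not vanish on the open interval.
-/

section HypergeometricPoly

open Polynomial

variable {𝕂 : Type*} [Field 𝕂]

lemma natCast_ne_neg_of_pos {R : Type*} [Ring R] [LinearOrder R] [IsStrictOrderedRing R] {c : R}
    (hc : 0 < c) (m : ℕ) : (m : R) ≠ -c :=
  ((neg_lt_zero.2 hc).trans_le m.cast_nonneg).ne'

/-- The hypergeometric polynomial `₂F₁(-j, b; c; X)`, i.e. the hypergeometric series truncated
after its last term that can be nonzero. -/
noncomputable def hypergeometricPoly (j : ℕ) (b c : 𝕂) : 𝕂[X] :=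
  ∑ m ∈ Finset.range (j + 1), C (ordinaryHypergeometricCoefficient (-(j : 𝕂)) b c m) * X ^ m

lemma ordinaryHypergeometricCoefficient_neg_nat_eq_zero {j m : ℕ} (b c : 𝕂) (hm : j < m) :
    ordinaryHypergeometricCoefficient (-(j : 𝕂)) b c m = 0 := by
  have h : (ascPochhammer 𝕂 m).eval (-(j : 𝕂)) = 0 :=
    (ascPochhammer_eval_eq_zero_iff m _).2 ⟨j, hm, (neg_neg _).symm⟩
  simp [ordinaryHypergeometricCoefficient, h]

lemma ordinaryHypergeometric_neg_nat_eq_eval [TopologicalSpace 𝕂] [IsTopologicalRing 𝕂]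
    (j : ℕ) (b c x : 𝕂) : ₂F₁ (-(j : 𝕂)) b c x = (hypergeometricPoly j b c).eval x := by
  rw [ordinaryHypergeometric_eq_tsum, hypergeometricPoly, eval_finsetSum]
  refine (tsum_eq_sum (s := Finset.range (j + 1)) fun m hm => ?_).trans ?_
  · exact smul_eq_zero_of_left
      (ordinaryHypergeometricCoefficient_neg_nat_eq_zero b c (by simpa using hm)) _
  · simp only [smul_eq_mul, eval_mul, eval_C, eval_pow, eval_X]

lemma coeff_hypergeometricPoly (j m : ℕ) (b c : 𝕂) :
    (hypergeometricPoly j b c).coeff m = ordinaryHypergeometricCoefficient (-(j : 𝕂)) b c m := by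
  simp only [hypergeometricPoly, finsetSum_coeff, coeff_C_mul_X_pow, Finset.sum_ite_eq,
    Finset.mem_range]
  split_ifs with h
  · rfl
  · exact (ordinaryHypergeometricCoefficient_neg_nat_eq_zero b c (by lia)).symm

variable [CharZero 𝕂]

lemma ordinaryHypergeometricCoefficient_succ (a b : 𝕂) {c : 𝕂} (hc : ∀ m : ℕ, (m : 𝕂) ≠ -c)
    (m : ℕ) :
    (m + 1) * (c + m) * ordinaryHypergeometricCoefficient a b c (m + 1) =
      (a + m) * (b + m) * ordinaryHypergeometricCoefficient a b c m := by
  have hcm : c + m ≠ 0 := fun h => hc m (eq_neg_of_add_eq_zero_right h)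
  have hpoch : (ascPochhammer 𝕂 m).eval c ≠ 0 := by simp [hc]
  have hm : (m + 1 : 𝕂) ≠ 0 := m.cast_add_one_ne_zero
  have hfact : (m.factorial : 𝕂) ≠ 0 := mod_cast m.factorial_ne_zero
  simp only [ordinaryHypergeometricCoefficient, ascPochhammer_succ_eval, Nat.factorial_succ]
  push_cast
  field_simp

lemma hypergeometricPoly_ode (j : ℕ) (b : 𝕂) {c : 𝕂} (hc : ∀ m : ℕ, (m : 𝕂) ≠ -c) :
    X * (1 - X) * derivative (derivative (hypergeometricPoly j b c)) +
      (C c - C (b - j + 1) * X) * derivative (hypergeometricPoly j b c) +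
      C (j * b) * hypergeometricPoly j b c = 0 := by
  have hrec (m : ℕ) : (m + 1) * (c + m) * (hypergeometricPoly j b c).coeff (m + 1) =
      (-j + m) * (b + m) * (hypergeometricPoly j b c).coeff m := by
    simpa only [coeff_hypergeometricPoly] using
      ordinaryHypergeometricCoefficient_succ (-(j : 𝕂)) b hc m
  generalize hypergeometricPoly j b c = P at hrec ⊢
  -- Coefficient extraction only sees through left multiplications by `X` and by constants.
  have hexpand : X * (1 - X) * derivative (derivative P) +
      (C c - C (b - j + 1) * X) * derivative P + C (j * b) * P =
      X * derivative (derivative P) - X * (X * derivative (derivative P)) +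
        C c * derivative P - C (b - j + 1) * (X * derivative P) + C (j * b) * P := by ring
  rw [hexpand]
  ext m
  have h := hrec m
  rcases m with _ | _ | m <;>
  · simp only [coeff_add, coeff_sub, coeff_C_mul, coeff_X_mul, coeff_X_mul_zero,
      coeff_derivative, coeff_zero]
    push_cast at h ⊢
    linear_combination h

lemma degree_hypergeometricPoly (j : ℕ) {b c : 𝕂} (hb : ∀ m : ℕ, (m : 𝕂) ≠ -b)
    (hc : ∀ m : ℕ, (m : 𝕂) ≠ -c) : (hypergeometricPoly j b c).degree = j := by
  refine degree_eq_of_le_of_coeff_ne_zero ?_ ?_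
  · refine (degree_le_iff_coeff_zero _ _).2 fun m hm => ?_
    rw [coeff_hypergeometricPoly]
    exact ordinaryHypergeometricCoefficient_neg_nat_eq_zero b c (mod_cast hm)
  · have hfact : (j.factorial : 𝕂) ≠ 0 := mod_cast j.factorial_ne_zero
    simp [coeff_hypergeometricPoly, ordinaryHypergeometricCoefficient, hfact, hb, hc]

lemma hypergeometricPoly_ne_zero (j : ℕ) {b c : 𝕂} (hb : ∀ m : ℕ, (m : 𝕂) ≠ -b)
    (hc : ∀ m : ℕ, (m : 𝕂) ≠ -c) : hypergeometricPoly j b c ≠ 0 :=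
  ne_zero_of_degree_gt ((WithBot.bot_lt_coe j).trans_eq (degree_hypergeometricPoly j hb hc).symm)

lemma span_range_hypergeometricPoly {b : ℕ → 𝕂} {c : 𝕂} (hb : ∀ j m : ℕ, (m : 𝕂) ≠ -b j)
    (hc : ∀ m : ℕ, (m : 𝕂) ≠ -c) :
    Submodule.span 𝕂 (range fun j => hypergeometricPoly j (b j) c) = ⊤ :=
  let S : Polynomial.Sequence 𝕂 :=
    ⟨fun j => hypergeometricPoly j (b j) c, fun j => degree_hypergeometricPoly j (hb j) hc⟩
  S.span fun j => (leadingCoeff_ne_zero.2 (S.ne_zero j)).isUnit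

end HypergeometricPoly

section JacobiOrthogonality

open Polynomial

lemma lagrange_identity_of_eigenfunctions {R : Type*} [CommRing R] {A B P Q : R[X]} {a b : R}
    (hP : A * derivative (derivative P) + B * derivative P + C a * P = 0)
    (hQ : A * derivative (derivative Q) + B * derivative Q + C b * Q = 0) :
    A * derivative (derivative P * Q - P * derivative Q) +
      B * (derivative P * Q - P * derivative Q) = C (b - a) * (P * Q) := by
  simp only [derivative_sub, derivative_mul, C_sub]
  linear_combination Q * hP - P * hQ

lemma intervalIntegrable_rpow_mul_one_sub_rpow {u v : ℝ} (hu : -1 < u) (hv : -1 < v) :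
    IntervalIntegrable (fun x : ℝ => x ^ u * (1 - x) ^ v) volume 0 1 := by
  have hbeta := (Complex.betaIntegral_convergent (u := (u + 1 : ℝ)) (v := (v + 1 : ℝ))
    (by rw [Complex.ofReal_re]; linarith) (by rw [Complex.ofReal_re]; linarith)).norm
  refine hbeta.congr_uIoo fun x hx => ?_
  rw [uIoo_of_le zero_le_one] at hx
  have hx' : 0 < 1 - x := sub_pos.2 hx.2
  have hcast : (1 - x : ℂ) = (1 - x : ℝ) := by push_cast; rfl
  simp only [hcast, norm_mul, Complex.norm_cpow_eq_rpow_re_of_pos hx.1,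
    Complex.norm_cpow_eq_rpow_re_of_pos hx', Complex.sub_re, Complex.ofReal_re, Complex.one_re,
    add_sub_cancel_right]

lemma hasDerivAt_rpow_mul_one_sub_rpow_mul_eval (a c : ℝ) (D : ℝ[X]) {x : ℝ} (hx : x ∈ Ioo 0 1) :
    HasDerivAt (fun x => x ^ c * (1 - x) ^ (a - c + 1) * D.eval x)
      (x ^ (c - 1) * (1 - x) ^ (a - c) *
        (X * (1 - X) * derivative D + (C c - C (a + 1) * X) * D).eval x) x := by
  have hx' : 0 < 1 - x := sub_pos.2 hx.2
  have hleft := hasDerivAt_rpow_const (p := c) (Or.inl hx.1.ne')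
  have hright := ((hasDerivAt_id x).const_sub 1).rpow_const (p := a - c + 1) (Or.inl hx'.ne')
  refine ((hleft.mul hright).mul (D.hasDerivAt x)).congr_deriv ?_
  have hxc : x ^ c = x ^ (c - 1) * x := by
    rw [← rpow_add_one hx.1.ne', sub_add_cancel]
  have hxd : (1 - x) ^ (a - c + 1) = (1 - x) ^ (a - c) * (1 - x) := rpow_add_one hx'.ne' _
  simp only [eval_add, eval_mul, eval_sub, eval_X, eval_C, eval_one, id, hxc, hxd,
    add_sub_cancel_right, Pi.mul_apply]
  ring

lemma integral_jacobiWeight_mul_eval_eq_zero {a c : ℝ} (hc : 0 < c) (hac : c < a + 1) (D : ℝ[X]) :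
    ∫ x in (0 : ℝ)..1, x ^ (c - 1) * (1 - x) ^ (a - c) *
      (X * (1 - X) * derivative D + (C c - C (a + 1) * X) * D).eval x = 0 := by
  have hac' : 0 < a - c + 1 := by linarith
  have hcont : Continuous fun x : ℝ => x ^ c * (1 - x) ^ (a - c + 1) * D.eval x := by
    fun_prop (disch := positivity)
  rw [intervalIntegral.integral_eq_sub_of_hasDerivAt_of_le zero_le_one hcont.continuousOn
    (fun x hx => hasDerivAt_rpow_mul_one_sub_rpow_mul_eval a c D hx)
    ((intervalIntegrable_rpow_mul_one_sub_rpow (by linarith) (by linarith)).mul_continuousOn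
      (Polynomial.continuous _).continuousOn)]
  simp [zero_rpow hc.ne', zero_rpow hac'.ne']

theorem integral_jacobiWeight_mul_hypergeometricPoly_mul_eq_zero {a c : ℝ} (hc : 0 < c)
    (hac : c < a + 1) {i j : ℕ} (hij : i ≠ j) :
    ∫ x in (0 : ℝ)..1, x ^ (c - 1) * (1 - x) ^ (a - c) *
      ((hypergeometricPoly i (a + i) c).eval x * (hypergeometricPoly j (a + j) c).eval x) = 0 := by
  have hode (l : ℕ) := hypergeometricPoly_ode l (a + l) (natCast_ne_neg_of_pos hc)
  simp only [add_sub_cancel_right] at hode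
  have heigenvalues : (j * (a + j) - i * (a + i) : ℝ) ≠ 0 := by
    have hsum : (1 : ℝ) ≤ i + j := mod_cast (by lia : 1 ≤ i + j)
    have hfactor : (j * (a + j) - i * (a + i) : ℝ) = (j - i) * (a + (i + j)) := by ring
    rw [hfactor]
    exact mul_ne_zero (sub_ne_zero.2 (mod_cast hij.symm)) (by linarith)
  have hint := integral_jacobiWeight_mul_eval_eq_zero hc hac
    (derivative (hypergeometricPoly i (a + i) c) * hypergeometricPoly j (a + j) c -
      hypergeometricPoly i (a + i) c * derivative (hypergeometricPoly j (a + j) c))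
  simp only [lagrange_identity_of_eigenfunctions (hode i) (hode j), eval_mul, eval_C,
    mul_left_comm _ (_ - _ : ℝ), intervalIntegral.integral_const_mul] at hint
  exact (mul_eq_zero.1 hint).resolve_left heigenvalues

end JacobiOrthogonality

section PolynomialCompletion

open Polynomial

lemma exists_polynomial_comp_near_of_injOn {Y : Type*} [TopologicalSpace Y] {K : Set Y}
    (hK : IsCompact K) {φ u : Y → ℝ} (hφ : ContinuousOn φ K) (hinj : InjOn φ K)
    (hu : ContinuousOn u K) {ε : ℝ} (hε : 0 < ε) :
    ∃ p : ℝ[X], ∀ x ∈ K, |p.eval (φ x) - u x| < ε := by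
  have := isCompact_iff_compactSpace.1 hK
  let φK : C(K, ℝ) := ⟨K.domRestrict φ, hφ.domRestrict⟩
  have hsep : (aeval (R := ℝ) φK).range.SeparatesPoints := fun x y hxy =>
    ⟨φK, ⟨φK, ⟨X, aeval_X φK⟩, rfl⟩, fun h => hxy (Subtype.ext (hinj x.2 y.2 h))⟩
  obtain ⟨⟨-, p, rfl⟩, hp⟩ :=
    ContinuousMap.exists_mem_subalgebra_near_continuous_of_separatesPoints
      _ hsep (K.domRestrict u) hu.domRestrict ε hε
  refine ⟨p, fun x hx => ?_⟩
  have heval : aeval φK p ⟨x, hx⟩ = p.eval (φ x) := aeval_continuousMap_apply p φK ⟨x, hx⟩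
  exact heval ▸ hp ⟨x, hx⟩

lemma ae_eval_comp_ne_zero {α : Type*} [MeasurableSpace α] {μ : Measure α}
    [NullSingletonClass μ] {K : Set α} (hμK : ∀ᵐ x ∂μ, x ∈ K) {φ : α → ℝ} (hinj : InjOn φ K)
    {p : ℝ[X]} (hp : p ≠ 0) : ∀ᵐ x ∂μ, p.eval (φ x) ≠ 0 := by
  have hfinite : {x ∈ K | p.eval (φ x) = 0}.Finite :=
    (finite_setOfPred_isRoot hp).of_injOn (fun _ hx => hx.2) (hinj.mono (sep_subset _ _))
  filter_upwards [hμK, compl_mem_ae_iff.2 (hfinite.measure_zero μ)] with x hxK hx h0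
  exact hx ⟨hxK, h0⟩

lemma toLp_ne_zero_of_ae_ne_zero {α E : Type*} [MeasurableSpace α] {μ : Measure α} [NeZero μ]
    [NormedAddCommGroup E] {q : ENNReal} {f : α → E} (hf : MemLp f q μ)
    (hf0 : ∀ᵐ x ∂μ, f x ≠ 0) : hf.toLp f ≠ 0 := fun h => by
  have hzero : f =ᵐ[μ] 0 := hf.coeFn_toLp.symm.trans (Lp.eq_zero_iff_ae_eq_zero.1 h)
  obtain ⟨x, hx, hx0⟩ := (hf0.and hzero).exists
  exact hx hx0

section T2Space

variable {Y : Type*} [TopologicalSpace Y] [T2Space Y] [MeasurableSpace Y] [OpensMeasurableSpace Y]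
  {μ : Measure Y} {K : Set Y} {φ f u : Y → ℝ}

lemma memLp_of_continuousOn_isCompact [IsFiniteMeasure μ] (hK : IsCompact K)
    (hμK : ∀ᵐ x ∂μ, x ∈ K) (hu : ContinuousOn u K) (q : ENNReal) : MemLp u q μ := by
  have hmeas : AEStronglyMeasurable u (μ.restrict K) := hu.aestronglyMeasurable_of_isCompact hK
    hK.measurableSet
  rw [Measure.restrict_eq_self_of_ae_mem hμK] at hmeas
  obtain ⟨B, hB⟩ := hK.exists_bound_of_continuousOn hu
  exact MemLp.of_bound hmeas B (hμK.mono hB)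

lemma integrable_continuousOn_mul (hK : IsCompact K) (hμK : ∀ᵐ x ∂μ, x ∈ K)
    (hu : ContinuousOn u K) (hf : Integrable f μ) : Integrable (fun x => u x * f x) μ := by
  have h := IntegrableOn.continuousOn_mul hu hf.integrableOn hK
  rwa [IntegrableOn, Measure.restrict_eq_self_of_ae_mem hμK] at h

lemma integrable_polynomial_comp_mul (hK : IsCompact K) (hμK : ∀ᵐ x ∂μ, x ∈ K)
    (hφ : ContinuousOn φ K) (hf : Integrable f μ) (p : ℝ[X]) :
    Integrable (fun x => p.eval (φ x) * f x) μ :=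
  integrable_continuousOn_mul hK hμK (p.continuous.comp_continuousOn hφ) hf

lemma integral_polynomial_comp_mul_eq_zero_of_span_eq_top (hK : IsCompact K)
    (hμK : ∀ᵐ x ∂μ, x ∈ K) (hφ : ContinuousOn φ K) (hf : Integrable f μ) {ι : Type*}
    {P : ι → ℝ[X]} (hP : Submodule.span ℝ (range P) = ⊤)
    (h : ∀ i, ∫ x, (P i).eval (φ x) * f x ∂μ = 0) (p : ℝ[X]) :
    ∫ x, p.eval (φ x) * f x ∂μ = 0 := by
  have hint := integrable_polynomial_comp_mul hK hμK hφ hf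
  let moment : ℝ[X] →ₗ[ℝ] ℝ :=
    { toFun := fun p => ∫ x, p.eval (φ x) * f x ∂μ
      map_add' := fun p q => by
        simp only [eval_add, add_mul]
        exact integral_add (hint p) (hint q)
      map_smul' := fun c p => by
        simp only [eval_smul, smul_eq_mul, mul_assoc, integral_const_mul, RingHom.id_apply] }
  have hmoment : moment = 0 := LinearMap.ext_on_range hP h
  exact DFunLike.congr_fun hmoment p

end T2Space

variable {E : Type*} [NormedAddCommGroup E] [NormedSpace ℝ E] [FiniteDimensional ℝ E]
  [MeasurableSpace E] [BorelSpace E] {μ : Measure E} {K : Set E} {φ f g : E → ℝ}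

lemma ae_eq_zero_of_integral_polynomial_comp_mul_eq_zero (hK : IsCompact K)
    (hμK : ∀ᵐ x ∂μ, x ∈ K) (hφ : ContinuousOn φ K) (hinj : InjOn φ K) (hf : Integrable f μ)
    (h : ∀ p : ℝ[X], ∫ x, p.eval (φ x) * f x ∂μ = 0) : f =ᵐ[μ] 0 := by
  refine ae_eq_zero_of_integral_contDiff_smul_eq_zero hf.locallyIntegrable fun u hu _ => ?_
  have hucont : ContinuousOn u K := hu.continuous.continuousOn
  have hsmall {ε : ℝ} (hε : 0 < ε) : |∫ x, u x * f x ∂μ| ≤ ε * ∫ x, |f x| ∂μ := by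
    obtain ⟨p, hp⟩ := exists_polynomial_comp_near_of_injOn hK hφ hinj hucont hε
    have hdiff : ∫ x, u x * f x ∂μ = ∫ x, (u x - p.eval (φ x)) * f x ∂μ := by
      simp only [sub_mul]
      rw [integral_sub (integrable_continuousOn_mul hK hμK hucont hf)
        (integrable_polynomial_comp_mul hK hμK hφ hf p), h p, sub_zero]
    rw [hdiff, ← integral_const_mul, ← norm_eq_abs]
    refine norm_integral_le_of_norm_le (hf.abs.const_mul ε) ?_
    filter_upwards [hμK] with x hx
    rw [norm_mul, norm_eq_abs, norm_eq_abs, abs_sub_comm]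
    exact mul_le_mul_of_nonneg_right (hp x hx).le (abs_nonneg _)
  by_contra hne
  obtain ⟨ε, hε, hlt⟩ := exists_pos_mul_lt (abs_pos.2 hne) (∫ x, |f x| ∂μ)
  exact (hsmall hε).not_gt (by simpa only [mul_comm, smul_eq_mul] using hlt)

theorem dense_span_toLp_mul_polynomial_comp (hK : IsCompact K) (hμK : ∀ᵐ x ∂μ, x ∈ K)
    (hφ : ContinuousOn φ K) (hinj : InjOn φ K) (hg : MemLp g 2 μ) (hg0 : ∀ᵐ x ∂μ, g x ≠ 0)
    {ι : Type*} {P : ι → ℝ[X]} (hP : Submodule.span ℝ (range P) = ⊤)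
    (hmem : ∀ i, MemLp (fun x => g x * (P i).eval (φ x)) 2 μ) :
    Dense (Submodule.span ℝ (range fun i => (hmem i).toLp _) : Set (Lp ℝ 2 μ)) := by
  rw [Submodule.dense_iff_topologicalClosure_eq_top, Submodule.topologicalClosure_eq_top_iff,
    Submodule.eq_bot_iff]
  intro f hf
  have hgf : Integrable (fun x => g x * f x) μ := hg.integrable_mul (Lp.memLp f)
  have horth (i : ι) : ∫ x, (P i).eval (φ x) * (g x * f x) ∂μ = 0 := by
    have hinner := (Submodule.mem_orthogonal _ f).1 hf _
      (Submodule.subset_span (mem_range_self i))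
    rw [L2.inner_def] at hinner
    rw [← hinner]
    refine integral_congr_ae ?_
    filter_upwards [(hmem i).coeFn_toLp] with x hx
    simp only [hx, RCLike.inner_apply, conj_trivial]
    ring
  have hzero := ae_eq_zero_of_integral_polynomial_comp_mul_eq_zero hK hμK hφ hinj hgf
    (integral_polynomial_comp_mul_eq_zero_of_span_eq_top hK hμK hφ hgf hP horth)
  rw [Lp.eq_zero_iff_ae_eq_zero]
  filter_upwards [hzero, hg0] with x hx hgx
  exact (mul_eq_zero.1 hx).resolve_left hgx

end PolynomialCompletion

section RadialMeasure

lemma sin_sq_half_eq (s r : ℝ) : sin (s * r / 2) ^ 2 = 1 / 2 - cos (s * r) / 2 := by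
  rw [sin_sq_eq_half_sub, mul_div_cancel₀ _ two_ne_zero]

lemma strictMonoOn_sin_sq_half {s : ℝ} (hs : 0 < s) :
    StrictMonoOn (fun r => sin (s * r / 2) ^ 2) (Icc 0 (π / s)) := by
  have hmem {r : ℝ} (hr : r ∈ Icc 0 (π / s)) : s * r ∈ Icc 0 π :=
    ⟨mul_nonneg hs.le hr.1, (le_div_iff₀' hs).1 hr.2⟩
  intro r hr t ht hrt
  simp only [sin_sq_half_eq]
  linarith [strictAntiOn_cos (hmem hr) (hmem ht) (mul_lt_mul_of_pos_left hrt hs)]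

lemma hasDerivAt_sin_sq_half (s r : ℝ) :
    HasDerivAt (fun r => sin (s * r / 2) ^ 2) (s / 2 * sin (s * r)) r := by
  simp only [sin_sq_half_eq]
  refine (((hasDerivAt_const_mul s).cos.div_const 2).const_sub (1 / 2)).congr_deriv ?_
  ring

lemma integral_comp_sin_sq_half {F : Type*} [NormedAddCommGroup F] [NormedSpace ℝ F] {s : ℝ}
    (hs : 0 < s) (g : ℝ → F) :
    ∫ r in Ioo 0 (π / s), (s / 2 * sin (s * r)) • g (sin (s * r / 2) ^ 2) =
      ∫ x in Ioo 0 1, g x := by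
  have hmono := (strictMonoOn_sin_sq_half hs).monotoneOn
  have himage : (fun r => sin (s * r / 2) ^ 2) '' Icc 0 (π / s) = Icc 0 1 := by
    rw [ContinuousOn.image_Icc_of_monotoneOn (by positivity) (by fun_prop) hmono,
      mul_div_cancel₀ _ hs.ne']
    simp
  rw [← integral_Icc_eq_integral_Ioo, ← integral_Icc_eq_integral_Ioo, ← himage]
  exact (integral_image_eq_integral_deriv_smul_of_monotoneOn measurableSet_Icc
    (fun r _ => (hasDerivAt_sin_sq_half s r).hasDerivWithinAt) hmono g).symm

lemma half_mul_mem_Ioo {s r : ℝ} (hs : 0 < s) (hr : r ∈ Ioo 0 (π / s)) :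
    s * r / 2 ∈ Ioo 0 (π / 2) :=
  ⟨half_pos (mul_pos hs hr.1), div_lt_div_of_pos_right ((lt_div_iff₀' hs).1 hr.2) two_pos⟩

lemma sin_half_pos {s r : ℝ} (hs : 0 < s) (hr : r ∈ Ioo 0 (π / s)) : 0 < sin (s * r / 2) :=
  have h := half_mul_mem_Ioo hs hr
  sin_pos_of_pos_of_lt_pi h.1 (by linarith [h.2, pi_pos])

lemma cos_half_pos {s r : ℝ} (hs : 0 < s) (hr : r ∈ Ioo 0 (π / s)) : 0 < cos (s * r / 2) :=
  have h := half_mul_mem_Ioo hs hr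
  cos_pos_of_mem_Ioo ⟨by linarith [h.1, pi_pos], h.2⟩

lemma sin_eq_two_mul_sin_half_mul_cos_half (s r : ℝ) :
    sin (s * r) = 2 * sin (s * r / 2) * cos (s * r / 2) := by
  rw [← sin_two_mul, mul_div_cancel₀ _ two_ne_zero]

lemma sq_rpow_half_sub_one {x : ℝ} (hx : 0 < x) (n : ℕ) :
    (x ^ 2) ^ ((n : ℝ) / 2 - 1) = x ^ n / x ^ 2 := by
  rw [rpow_sub_one (by positivity), ← rpow_natCast x 2, ← rpow_mul hx.le, Nat.cast_ofNat,
    mul_div_cancel₀ _ two_ne_zero, rpow_natCast]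

variable {n : ℕ} {k r : ℝ}

lemma radialDensity_pos (n : ℕ) (hk : 0 < k) (hr : r ∈ Ioo 0 (π / √k)) :
    0 < radialDensity n k r := by
  have hs := sqrt_pos.2 hk
  have hsin := sin_half_pos hs hr
  have hcos := cos_half_pos hs hr
  rw [radialDensity, sin_eq_two_mul_sin_half_mul_cos_half]
  positivity

lemma radialDensity_eq_rpow (hn : 0 < n) (hk : 0 < k) (hr : r ∈ Ioo 0 (π / √k)) :
    radialDensity n k r = (2 / √k) ^ n / 2 * (√k / 2 * sin (√k * r) *
      ((sin (√k * r / 2) ^ 2) ^ ((n : ℝ) / 2 - 1) *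
        (1 - sin (√k * r / 2) ^ 2) ^ ((n : ℝ) / 2 - 1))) := by
  have hs := sqrt_pos.2 hk
  have hsin := sin_half_pos hs hr
  have hcos := cos_half_pos hs hr
  rw [radialDensity, ← cos_sq', sq_rpow_half_sub_one hsin, sq_rpow_half_sub_one hcos,
    sin_eq_two_mul_sin_half_mul_cos_half]
  obtain ⟨m, rfl⟩ := Nat.exists_eq_add_of_lt hn
  simp only [zero_add, add_tsub_cancel_right, mul_pow, div_pow, pow_succ]
  field_simp

lemma integral_comp_sin_sq_half_mul_radialDensity (hn : 0 < n) (hk : 0 < k) (g : ℝ → ℝ) :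
    ∫ r in Ioo 0 (π / √k), g (sin (√k * r / 2) ^ 2) * radialDensity n k r =
      (2 / √k) ^ n / 2 *
        ∫ x in Ioo 0 1, x ^ ((n : ℝ) / 2 - 1) * (1 - x) ^ ((n : ℝ) / 2 - 1) * g x := by
  rw [← integral_comp_sin_sq_half (sqrt_pos.2 hk), ← integral_const_mul]
  refine setIntegral_congr_fun measurableSet_Ioo fun r hr => ?_
  simp only [radialDensity_eq_rpow hn hk hr, smul_eq_mul]
  ring

theorem integral_cos_mul_hypergeometricPoly_mul_radialDensity_eq_zero (hn : 0 < n) (hk : 0 < k)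
    {i j : ℕ} (hij : i ≠ j) :
    ∫ r in Ioo 0 (π / √k),
      cos (√k * r / 2) * (hypergeometricPoly i (n + i : ℝ) (n / 2)).eval (sin (√k * r / 2) ^ 2) *
      (cos (√k * r / 2) * (hypergeometricPoly j (n + j : ℝ) (n / 2)).eval (sin (√k * r / 2) ^ 2)) *
      radialDensity n k r = 0 := by
  have hn' : (0 : ℝ) < n := mod_cast hn
  have hjacobi := integral_jacobiWeight_mul_hypergeometricPoly_mul_eq_zero (a := n) (c := n / 2)
    (by positivity) (by linarith) hij
  rw [intervalIntegral.integral_of_le zero_le_one, integral_Ioc_eq_integral_Ioo] at hjacobi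
  let g (x : ℝ) := (1 - x) * ((hypergeometricPoly i (n + i : ℝ) (n / 2)).eval x *
    (hypergeometricPoly j (n + j : ℝ) (n / 2)).eval x)
  calc
    _ = ∫ r in Ioo 0 (π / √k), g (sin (√k * r / 2) ^ 2) * radialDensity n k r := by
      refine integral_congr_ae (ae_of_all _ fun r => ?_)
      simp only [g, ← cos_sq']
      ring
    _ = (2 / √k) ^ n / 2 *
          ∫ x in Ioo 0 1, x ^ ((n : ℝ) / 2 - 1) * (1 - x) ^ ((n : ℝ) / 2 - 1) * g x :=
      integral_comp_sin_sq_half_mul_radialDensity hn hk g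
    _ = 0 := by
      refine mul_eq_zero_of_right _ (Eq.trans ?_ hjacobi)
      refine setIntegral_congr_fun measurableSet_Ioo fun x hx => ?_
      have hexp : (1 - x) ^ ((n : ℝ) - n / 2) = (1 - x) ^ ((n : ℝ) / 2 - 1) * (1 - x) := by
        rw [← rpow_add_one (sub_pos.2 hx.2).ne', sub_add_cancel, sub_half]
      simp only [g, hexp]
      ring

lemma continuous_radialDensity (n : ℕ) (k : ℝ) : Continuous (radialDensity n k) := by
  unfold radialDensity
  fun_prop

instance (n : ℕ) (k : ℝ) : IsFiniteMeasure (radialMeasure n k) :=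
  isFiniteMeasure_withDensity_ofReal
    ((continuous_radialDensity n k).integrableOn_Icc.mono_set Ioo_subset_Icc_self).2

instance (n : ℕ) (k : ℝ) : NullSingletonClass (radialMeasure n k) :=
  ⟨fun r => withDensity_absolutelyContinuous _ _ (measure_singleton r)⟩

lemma ae_radialMeasure_mem_Ioo (n : ℕ) (k : ℝ) :
    ∀ᵐ r ∂radialMeasure n k, r ∈ Ioo 0 (π / √k) :=
  (withDensity_absolutelyContinuous _ _).ae_le (ae_restrict_mem measurableSet_Ioo)

lemma radialMeasure_ne_zero (n : ℕ) (hk : 0 < k) : radialMeasure n k ≠ 0 := fun h => by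
  have hpos : ∀ᵐ r ∂volume.restrict (Ioo 0 (π / √k)),
      ENNReal.ofReal (radialDensity n k r) ≠ 0 := by
    filter_upwards [ae_restrict_mem measurableSet_Ioo] with r hr
    exact (ENNReal.ofReal_pos.2 (radialDensity_pos n hk hr)).ne'
  have hac : volume.restrict (Ioo 0 (π / √k)) ≪ radialMeasure n k :=
    withDensity_absolutelyContinuous'
      (continuous_radialDensity n k).measurable.ennreal_ofReal.aemeasurable hpos
  have hvol : volume.restrict (Ioo 0 (π / √k)) = 0 :=
    Measure.absolutelyContinuous_zero_iff.1 (h ▸ hac)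
  simp [Measure.restrict_eq_zero, (sqrt_pos.2 hk).not_ge, div_nonpos_iff, pi_pos.not_ge] at hvol

end RadialMeasure

theorem complete_orthogonal_system_general (n : ℕ) (hn : 0 < n) (k : ℝ) (hk : 0 < k)
    (w : ℕ → ℝ → ℝ)
    (hw : ∀ (j : ℕ) (r : ℝ), w j r = Real.cos (Real.sqrt k * r / 2) *
      ₂F₁ (-(j : ℝ)) ((n : ℝ) + j) ((n : ℝ) / 2) (Real.sin (Real.sqrt k * r / 2) ^ 2)) :
    ∃ hmem : ∀ j : ℕ, MemLp (w j) 2 (radialMeasure n k),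
      (∀ j : ℕ, (hmem j).toLp (w j) ≠ 0) ∧
      (∀ j j' : ℕ, j ≠ j' →
        ∫ r in Ioo (0 : ℝ) (π / Real.sqrt k),
          w j r * w j' r * radialDensity n k r = 0) ∧
      Dense (↑(Submodule.span ℝ (Set.range fun j : ℕ => (hmem j).toLp (w j))) :
        Set (Lp ℝ 2 (radialMeasure n k))) := by
  let P (j : ℕ) := hypergeometricPoly j (n + j : ℝ) (n / 2)
  obtain rfl : w = fun j r => cos (√k * r / 2) * (P j).eval (sin (√k * r / 2) ^ 2) := by
    ext j r
    rw [hw, ordinaryHypergeometric_neg_nat_eq_eval]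
  have hb (j : ℕ) := natCast_ne_neg_of_pos (show (0 : ℝ) < n + j by positivity)
  have hc := natCast_ne_neg_of_pos (show (0 : ℝ) < n / 2 by positivity)
  have := NeZero.mk (radialMeasure_ne_zero n hk)
  have hK : ∀ᵐ r ∂radialMeasure n k, r ∈ Icc 0 (π / √k) :=
    (ae_radialMeasure_mem_Ioo n k).mono fun _ hr => Ioo_subset_Icc_self hr
  have hinj := (strictMonoOn_sin_sq_half (sqrt_pos.2 hk)).injOn
  have hcos : ∀ᵐ r ∂radialMeasure n k, cos (√k * r / 2) ≠ 0 :=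
    (ae_radialMeasure_mem_Ioo n k).mono fun _ hr => (cos_half_pos (sqrt_pos.2 hk) hr).ne'
  have hmem (j : ℕ) := memLp_of_continuousOn_isCompact isCompact_Icc hK
    (u := fun r => cos (√k * r / 2) * (P j).eval (sin (√k * r / 2) ^ 2)) (by fun_prop) 2
  refine ⟨hmem, fun j => toLp_ne_zero_of_ae_ne_zero (hmem j) ?_, fun i j hij => ?_, ?_⟩
  · filter_upwards [hcos, ae_eval_comp_ne_zero hK hinj (hypergeometricPoly_ne_zero j (hb j) hc)]
      with r hr hPr using mul_ne_zero hr hPr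
  · exact integral_cos_mul_hypergeometricPoly_mul_radialDensity_eq_zero hn hk hij
  · exact dense_span_toLp_mul_polynomial_comp isCompact_Icc hK (by fun_prop) hinj
      (memLp_of_continuousOn_isCompact isCompact_Icc hK (by fun_prop) 2) hcos
      (span_range_hypergeometricPoly hb hc) hmem


theorem complete_orthogonal_system (n : ℕ) (hn : 2 ≤ n) (k : ℝ) (hk : 0 < k)
    (w : ℕ → ℝ → ℝ)
    (hw : ∀ (j : ℕ) (r : ℝ), w j r = Real.cos (Real.sqrt k * r / 2) *
      ₂F₁ (-(j : ℝ)) ((n : ℝ) + j) ((n : ℝ) / 2) (Real.sin (Real.sqrt k * r / 2) ^ 2)) :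
    ∃ hmem : ∀ j : ℕ, MemLp (w j) 2 (radialMeasure n k),
      (∀ j : ℕ, (hmem j).toLp (w j) ≠ 0) ∧
      (∀ j j' : ℕ, j ≠ j' →
        ∫ r in Ioo (0 : ℝ) (π / Real.sqrt k),
          w j r * w j' r * radialDensity n k r = 0) ∧
      Dense (↑(Submodule.span ℝ (Set.range fun j : ℕ => (hmem j).toLp (w j))) :
        Set (Lp ℝ 2 (radialMeasure n k))) :=
  complete_orthogonal_system_general n (by lia) k hk w hw
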